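/- Let G be a finite set of atomic constraints over a finite set X of clocks. For all valuations v, v': v ⊑^LU_G v' implies v ⊑_G v'. (That is, the relation ⊑^LU_G refines ⊑_G.) -/

import Mathlib

open scoped NNReal

/-! ## Atomic constraints over a set of clocks -/

/-- Comparison operator `◁ ∈ {<, ≤}`. -/
inductive Ineq : Type where
  | lt : Ineq
  | le : Ineq
deriving DecidableEq

/-- Interpretation of a comparison operator on reals. -/
def Ineq.holds : Ineq → ℝ → ℝ → Prop
  | .lt, a, b => a < b
  | .le, a, b => a ≤ b

/-- Atomic constraints over clocks `X`:
`upper x o c` is `x ◁ c` (c ∈ ℕ), `lower c o x` is `c ◁ x` (c ∈ ℕ),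
`diag x y o d` is `x - y ◁ d` (d ∈ ℤ). -/
inductive Constr (X : Type) : Type where
  | upper : X → Ineq → ℕ → Constr X
  | lower : ℕ → Ineq → X → Constr X
  | diag : X → X → Ineq → ℤ → Constr X
deriving DecidableEq

namespace Constr

/-- Is the constraint a diagonal constraint `x - y ◁ d`? -/
def isDiag {X : Type} : Constr X → Bool
  | .diag _ _ _ _ => true
  | _ => false

/-- The integer constant of a constraint. -/
def constOf {X : Type} : Constr X → ℤ
  | .upper _ _ c => (c : ℤ)
  | .lower c _ _ => (c : ℤ)
  | .diag _ _ _ d => d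

/-- Satisfaction of a constraint by a clock valuation `v : X → ℝ≥0`. -/
def sat {X : Type} (v : X → ℝ≥0) : Constr X → Prop
  | .upper x o c => o.holds (v x : ℝ) (c : ℝ)
  | .lower c o x => o.holds (c : ℝ) (v x : ℝ)
  | .diag x y o d => o.holds ((v x : ℝ) - (v y : ℝ)) (d : ℝ)

end Constr

/-- Time elapse: `v + δ`. -/
def shift {X : Type} (v : X → ℝ≥0) (δ : ℝ≥0) : X → ℝ≥0 := fun x => v x + δ

/-- The relation `v ⊑_G v'`: for all `φ ∈ G` and all delays `δ ≥ 0`,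
`v + δ ⊨ φ` implies `v' + δ ⊨ φ`. -/
def simG {X : Type} (G : Set (Constr X)) (v v' : X → ℝ≥0) : Prop :=
  ∀ φ ∈ G, ∀ δ : ℝ≥0, Constr.sat (shift v δ) φ → Constr.sat (shift v' δ) φ

/-- `Z ⊑_G Z'` on sets of valuations. -/
def simGZ {X : Type} (G : Set (Constr X)) (Z Z' : Set (X → ℝ≥0)) : Prop :=
  ∀ v ∈ Z, ∃ v' ∈ Z', simG G v v'

open Classical in
/-- `[R]v`: reset the clocks in `R` to `0`. -/
noncomputable def reset {X : Type} (R : Set X) (v : X → ℝ≥0) : X → ℝ≥0 :=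
  fun x => if x ∈ R then 0 else v x

/-- Weakest precondition `wp(⊑_φ, R)` of a single constraint over a reset. -/
def wpReset {X : Type} (R : Set X) : Constr X → Set (Constr X)
  | .upper x o c => {ψ | x ∉ R ∧ ψ = .upper x o c}
  | .lower c o x => {ψ | x ∉ R ∧ ψ = .lower c o x}
  | .diag x y o d =>
      {ψ | (x ∉ R ∧ y ∉ R ∧ ψ = .diag x y o d) ∨
           (x ∉ R ∧ y ∈ R ∧ 0 ≤ d ∧ ψ = .upper x o d.toNat) ∨
           (x ∈ R ∧ y ∉ R ∧ 0 ≤ -d ∧ ψ = .lower (-d).toNat o y)}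

/-- Weakest precondition `wp(⊑_G, R)` of a set of constraints over a reset. -/
def wpResetSet {X : Type} (R : Set X) (G : Set (Constr X)) : Set (Constr X) :=
  ⋃ φ ∈ G, wpReset R φ

/-! ## Timed automata -/

/-- A transition: source state, guard (finite conjunction of constraints),
reset set, target state. -/
abbrev TTrans (Q X : Type) : Type := Q × Finset (Constr X) × Set X × Q

def TTrans.src {Q X : Type} (t : TTrans Q X) : Q := t.1
def TTrans.grd {Q X : Type} (t : TTrans Q X) : Finset (Constr X) := t.2.1
def TTrans.rst {Q X : Type} (t : TTrans Q X) : Set X := t.2.2.1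
def TTrans.tgt {Q X : Type} (t : TTrans Q X) : Q := t.2.2.2

/-- A timed automaton. -/
structure TA (Q X : Type) : Type where
  init : Q
  trans : Finset (TTrans Q X)
  acc : Set Q

/-- Action step of a timed automaton along transition `t`. -/
def Step {Q X : Type} (A : TA Q X) (t : TTrans Q X) (c c' : Q × (X → ℝ≥0)) : Prop :=
  t ∈ A.trans ∧ TTrans.src t = c.1 ∧ (∀ φ ∈ TTrans.grd t, Constr.sat c.2 φ) ∧
    c'.1 = TTrans.tgt t ∧ c'.2 = reset (TTrans.rst t) c.2

/-- `r` is a simulation on the configurations of `A`: a reflexive transitive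
relation, relating only configurations with equal states, compatible with
delays and action transitions. -/
def IsSimulation {Q X : Type} (A : TA Q X)
    (r : (Q × (X → ℝ≥0)) → (Q × (X → ℝ≥0)) → Prop) : Prop :=
  Reflexive r ∧ Transitive r ∧
  ∀ q v q' v', r (q, v) (q', v') →
    q = q' ∧
    (∀ δ : ℝ≥0, ∃ δ' : ℝ≥0, r (q, shift v δ) (q, shift v' δ')) ∧
    (∀ t c₁, Step A t (q, v) c₁ →
      ∃ v₁', Step A t (q, v') (c₁.1, v₁') ∧ r c₁ (c₁.1, v₁'))

/-- The state-based guard equations: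
`G(q) = ⋃_{(q,g,R,q₁) ∈ T} ({g} ∪ wp(⊑_{G(q₁)}, R))`. -/
def GuardEq {Q X : Type} (A : TA Q X) (G : Q → Set (Constr X)) : Prop :=
  ∀ q, G q = ⋃ t ∈ A.trans, ⋃ (_ : TTrans.src t = q),
    ((TTrans.grd t : Set (Constr X)) ∪ wpResetSet (TTrans.rst t) (G (TTrans.tgt t)))

/-! ## LU bounds -/

def lowerConstAt {X : Type} [DecidableEq X] (x : X) : Constr X → WithBot ℕ
  | .lower c _ y => if y = x then (c : WithBot ℕ) else ⊥
  | _ => ⊥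

def upperConstAt {X : Type} [DecidableEq X] (x : X) : Constr X → WithBot ℕ
  | .upper y _ c => if y = x then (c : WithBot ℕ) else ⊥
  | _ => ⊥

/-- `L_G(x)`: maximum constant among lower-bound constraints `c ◁ x` in `G`
(`⊥ = -∞` if none). -/
def Lbound {X : Type} [DecidableEq X] (G : Finset (Constr X)) (x : X) : WithBot ℕ :=
  G.sup (lowerConstAt x)

/-- `U_G(x)`: maximum constant among upper-bound constraints `x ◁ c` in `G`
(`⊥ = -∞` if none). -/
def Ubound {X : Type} [DecidableEq X] (G : Finset (Constr X)) (x : X) : WithBot ℕ :=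
  G.sup (upperConstAt x)

/-- The LU simulation `v ≼_LU v'` for bounds functions `L U : X → ℕ ∪ {-∞}`. -/
def luSim {X : Type} (L U : X → WithBot ℕ) (v v' : X → ℝ≥0) : Prop :=
  ∀ x : X,
    (v' x < v x → (L x).map (fun c : ℕ => (c : ℝ)) < ((v' x : ℝ) : WithBot ℝ)) ∧
    (v x < v' x → (U x).map (fun c : ℕ => (c : ℝ)) < ((v x : ℝ) : WithBot ℝ))

/-- The relation `v ⊑^LU_G v'`: `v ≼_{LU(G)} v'` and every diagonal constraint
of `G` satisfied by `v` is satisfied by `v'`. -/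
def luglu {X : Type} [DecidableEq X] (G : Finset (Constr X)) (v v' : X → ℝ≥0) : Prop :=
  luSim (Lbound G) (Ubound G) v v' ∧
    ∀ φ ∈ G, φ.isDiag → Constr.sat v φ → Constr.sat v' φ

/-- Lifting a relation on valuations to sets of valuations. -/
def zoneRel {X : Type} (r : (X → ℝ≥0) → (X → ℝ≥0) → Prop) (Z Z' : Set (X → ℝ≥0)) : Prop :=
  ∀ v ∈ Z, ∃ v' ∈ Z', r v v'

/-! ## Runs of timed automata -/

/-- `stepsFrom A c l`: the alternating delay-action sequence `l` is a valid
sequence of steps of `A` starting at configuration `c`. -/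
def stepsFrom {Q X : Type} (A : TA Q X) :
    (Q × (X → ℝ≥0)) → List (ℝ≥0 × TTrans Q X) → Prop
  | _, [] => True
  | c, (δ, t) :: l =>
      t ∈ A.trans ∧ TTrans.src t = c.1 ∧
      (∀ φ ∈ TTrans.grd t, Constr.sat (shift c.2 δ) φ) ∧
      stepsFrom A (TTrans.tgt t, reset (TTrans.rst t) (shift c.2 δ)) l

/-- Configuration reached after a sequence of delay-action steps. -/
noncomputable def endConfig {Q X : Type} :
    (Q × (X → ℝ≥0)) → List (ℝ≥0 × TTrans Q X) → (Q × (X → ℝ≥0))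
  | c, [] => c
  | c, (δ, t) :: l => endConfig (TTrans.tgt t, reset (TTrans.rst t) (shift c.2 δ)) l

/-- A run of `A`: a valid sequence of delay-action steps from `(q₀, 0̄)`. -/
def TA.Run {Q X : Type} (A : TA Q X) : Type :=
  {l : List (ℝ≥0 × TTrans Q X) // stepsFrom A (A.init, fun _ => 0) l}

/-- A run is accepting if it ends in an accepting state. -/
def TA.Accepting {Q X : Type} (A : TA Q X) (r : A.Run) : Prop :=
  (endConfig (A.init, fun _ => 0) r.val).1 ∈ A.acc

/-- `A` is diagonal-free: no guard contains a diagonal constraint. -/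
def DiagFree {Q X : Type} (A : TA Q X) : Prop :=
  ∀ t ∈ A.trans, ∀ φ ∈ TTrans.grd t, ¬ φ.isDiag

/-- The (finite) set of diagonal constraints occurring in guards of `A`. -/
def diagGuards {Q X : Type} [DecidableEq X] (A : TA Q X) : Finset (Constr X) :=
  A.trans.biUnion fun t => (TTrans.grd t).filter fun φ => φ.isDiag

/-! ## Updateable timed automata -/

/-- Atomic update of a clock: `x := c` or `x := y + d`. -/
inductive AtomicUp (X : Type) : Type where
  | const : ℕ → AtomicUp X
  | add : X → ℤ → AtomicUp X
deriving DecidableEq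

/-- `up(v) : X → ℝ` (may be negative). -/
def applyUpd {X : Type} (up : X → AtomicUp X) (v : X → ℝ≥0) : X → ℝ :=
  fun x => match up x with
    | .const c => (c : ℝ)
    | .add y d => (v y : ℝ) + (d : ℝ)

/-- Weakest precondition `wp(⊑_φ, up)` of a single constraint over an update. -/
def wpUpd {X : Type} [DecidableEq X] (up : X → AtomicUp X) : Constr X → Set (Constr X)
  | .upper x o c =>
      match up x with
      | .const _ => ∅
      | .add y d => if 0 ≤ (c : ℤ) - d then {Constr.upper y o ((c : ℤ) - d).toNat} else ∅
  | .lower c o x =>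
      match up x with
      | .const _ => ∅
      | .add y d => if 0 ≤ (c : ℤ) - d then {Constr.lower ((c : ℤ) - d).toNat o y} else ∅
  | .diag x y o c =>
      match up x, up y with
      | .const _, .const _ => ∅
      | .add y₁ d₁, .const c₂ =>
          if 0 ≤ c + (c₂ : ℤ) - d₁ then {Constr.upper y₁ o (c + (c₂ : ℤ) - d₁).toNat} else ∅
      | .const c₁, .add y₂ d₂ =>
          if 0 ≤ (c₁ : ℤ) - d₂ - c then {Constr.lower ((c₁ : ℤ) - d₂ - c).toNat o y₂} else ∅
      | .add y₁ d₁, .add y₂ d₂ =>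
          if y₁ = y₂ then ∅ else {Constr.diag y₁ y₂ o (c - d₁ + d₂)}

/-- Weakest precondition `wp(⊑_G, up)` of a set of constraints over an update. -/
def wpUpdSet {X : Type} [DecidableEq X] (up : X → AtomicUp X) (G : Set (Constr X)) :
    Set (Constr X) :=
  ⋃ φ ∈ G, wpUpd up φ

/-- The set of constraints `{0 ≤ x | x ∈ X}`. -/
def nonnegConstrs (X : Type) : Set (Constr X) := {φ | ∃ x : X, φ = Constr.lower 0 Ineq.le x}

/-- A transition of an updateable timed automaton: source, guard, update, target. -/
abbrev UTrans (Q X : Type) : Type := Q × Finset (Constr X) × (X → AtomicUp X) × Q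

def UTrans.src {Q X : Type} (t : UTrans Q X) : Q := t.1
def UTrans.grd {Q X : Type} (t : UTrans Q X) : Finset (Constr X) := t.2.1
def UTrans.upd {Q X : Type} (t : UTrans Q X) : X → AtomicUp X := t.2.2.1
def UTrans.tgt {Q X : Type} (t : UTrans Q X) : Q := t.2.2.2

/-- An updateable timed automaton. -/
structure UTA (Q X : Type) : Type where
  init : Q
  trans : Finset (UTrans Q X)
  acc : Set Q

/-- Action step of an updateable timed automaton along transition `t`:
the guard holds, `up(v) ≥ 0`, and the new valuation is `up(v)`. -/
def UStep {Q X : Type} (A : UTA Q X) (t : UTrans Q X) (c c' : Q × (X → ℝ≥0)) : Prop :=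
  t ∈ A.trans ∧ UTrans.src t = c.1 ∧ (∀ φ ∈ UTrans.grd t, Constr.sat c.2 φ) ∧
    c'.1 = UTrans.tgt t ∧ ∀ x, (c'.2 x : ℝ) = applyUpd (UTrans.upd t) c.2 x

/-- `r` is a simulation on configurations of an updateable timed automaton. -/
def IsSimulationU {Q X : Type} (A : UTA Q X)
    (r : (Q × (X → ℝ≥0)) → (Q × (X → ℝ≥0)) → Prop) : Prop :=
  Reflexive r ∧ Transitive r ∧
  ∀ q v q' v', r (q, v) (q', v') →
    q = q' ∧
    (∀ δ : ℝ≥0, ∃ δ' : ℝ≥0, r (q, shift v δ) (q, shift v' δ')) ∧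
    (∀ t c₁, UStep A t (q, v) c₁ →
      ∃ v₁', UStep A t (q, v') (c₁.1, v₁') ∧ r c₁ (c₁.1, v₁'))

/-- State-based guard equations for updateable timed automata. -/
def GuardEqU {Q X : Type} [DecidableEq X] (A : UTA Q X) (G : Q → Set (Constr X)) : Prop :=
  ∀ q, G q = ⋃ t ∈ A.trans, ⋃ (_ : UTrans.src t = q),
    ((UTrans.grd t : Set (Constr X)) ∪ wpUpdSet (UTrans.upd t) (nonnegConstrs X)
      ∪ wpUpdSet (UTrans.upd t) (G (UTrans.tgt t)))

/-- Kleene iterates `G^i(q)` of the state-based guard equations. -/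
def iterG {Q X : Type} [DecidableEq X] (A : UTA Q X) : ℕ → Q → Set (Constr X)
  | 0 => fun q => ⋃ t ∈ A.trans, ⋃ (_ : UTrans.src t = q),
      ((UTrans.grd t : Set (Constr X)) ∪ wpUpdSet (UTrans.upd t) (nonnegConstrs X))
  | (i + 1) => fun q => iterG A i q ∪
      (⋃ t ∈ A.trans, ⋃ (_ : UTrans.src t = q),
        wpUpdSet (UTrans.upd t) (iterG A i (UTrans.tgt t)))

/-- `G^{i+1}(q)` is coloured red: a new diagonal constraint was added, or a new
non-diagonal constraint whose constant is strictly bigger than the constant of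
every non-diagonal constraint of the same kind on the same clock in `G^i(q)`. -/
def RedAt {Q X : Type} [DecidableEq X] (A : UTA Q X) : ℕ → Q → Prop
  | 0, _ => False
  | (i + 1), q =>
      (∃ φ : Constr X, φ ∈ iterG A (i + 1) q ∧ φ ∉ iterG A i q ∧ φ.isDiag) ∨
      (∃ (x : X) (o : Ineq) (c : ℕ),
        Constr.upper x o c ∈ iterG A (i + 1) q ∧ Constr.upper x o c ∉ iterG A i q ∧
        ∀ (o' : Ineq) (c' : ℕ), Constr.upper x o' c' ∈ iterG A i q → c' < c) ∨
      (∃ (x : X) (o : Ineq) (c : ℕ),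
        Constr.lower c o x ∈ iterG A (i + 1) q ∧ Constr.lower c o x ∉ iterG A i q ∧
        ∀ (o' : Ineq) (c' : ℕ), Constr.lower c' o' x ∈ iterG A i q → c' < c)

/-- `G^i(q)` is coloured green. -/
def GreenAt {Q X : Type} [DecidableEq X] (A : UTA Q X) (i : ℕ) (q : Q) : Prop :=
  ¬ RedAt A i q

/-- Absolute value of the constant of an atomic update. -/
def updBound {X : Type} : AtomicUp X → ℕ
  | .const c => c
  | .add _ d => d.natAbs

/-! ## The statement -/

/-
Letting time elapse preserves `⊑^LU_G`: a common delay keeps all clock differences, hence the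
diagonal part and the order of `v x` and `v' x`, and only increases the values that must exceed the
bounds. It therefore suffices to compare `v` and `v'` without delay. There, if `v' x` differs from
`v x` in the direction that could break a constraint on `x`, then `≼_LU` puts the smaller of the two
above the constant, so that an upper bound already fails at `v` and a lower bound holds at `v'`.
-/

theorem Ineq.le_of_holds {o : Ineq} {a b : ℝ} (h : o.holds a b) : a ≤ b := by
  cases o
  · exact le_of_lt h
  · exact h

theorem Ineq.holds_of_lt {a b : ℝ} (o : Ineq) (h : a < b) : o.holds a b := by
  cases o
  · exact h
  · exact h.le

theorem Ineq.holds_mono {o : Ineq} {a a' b b' : ℝ} (ha : a' ≤ a) (hb : b ≤ b')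
    (h : o.holds a b) : o.holds a' b' := by
  cases o
  · exact (ha.trans_lt h).trans_le hb
  · exact (ha.trans h).trans hb

theorem natCast_lt_of_le_of_map_lt {c : ℕ} {a : WithBot ℕ} {r : ℝ} (hc : (c : WithBot ℕ) ≤ a)
    (ha : a.map (fun n : ℕ => (n : ℝ)) < (r : WithBot ℝ)) : (c : ℝ) < r :=
  WithBot.coe_lt_coe.mp ((Nat.mono_cast.withBot_map hc).trans_lt ha)

section

variable {X : Type} {v v' : X → ℝ≥0}

theorem Constr.sat_shift_iff_of_isDiag {φ : Constr X} (hφ : φ.isDiag) (v : X → ℝ≥0) (δ : ℝ≥0) :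
    φ.sat (shift v δ) ↔ φ.sat v := by
  cases φ with
  | diag x y o d => simp only [sat, shift, NNReal.coe_add, add_sub_add_right_eq_sub]
  | upper | lower => cases hφ

namespace luSim

variable {L U : X → WithBot ℕ}

protected theorem shift (h : luSim L U v v') (δ : ℝ≥0) : luSim L U (shift v δ) (shift v' δ) := by
  have le_delay (w : X → ℝ≥0) (x : X) : ((w x : ℝ) : WithBot ℝ) ≤ (shift w δ x : ℝ) :=
    WithBot.coe_le_coe.mpr (NNReal.coe_le_coe.mpr le_self_add)
  intro x
  constructor
  · intro hlt
    exact ((h x).1 (lt_of_add_lt_add_right hlt)).trans_le (le_delay v' x)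
  · intro hlt
    exact ((h x).2 (lt_of_add_lt_add_right hlt)).trans_le (le_delay v x)

theorem sat_upper (h : luSim L U v v') {x : X} {o : Ineq} {c : ℕ} (hc : (c : WithBot ℕ) ≤ U x)
    (hv : (Constr.upper x o c).sat v) : (Constr.upper x o c).sat v' := by
  have hle : v' x ≤ v x := by
    by_contra! hlt
    have hcv : (c : ℝ) < v x := natCast_lt_of_le_of_map_lt hc ((h x).2 hlt)
    exact hcv.not_ge (Ineq.le_of_holds hv)
  exact Ineq.holds_mono (NNReal.coe_le_coe.mpr hle) le_rfl hv

theorem sat_lower (h : luSim L U v v') {x : X} {o : Ineq} {c : ℕ} (hc : (c : WithBot ℕ) ≤ L x)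
    (hv : (Constr.lower c o x).sat v) : (Constr.lower c o x).sat v' := by
  rcases lt_or_ge (v' x) (v x) with hlt | hle
  · exact Ineq.holds_of_lt o (natCast_lt_of_le_of_map_lt hc ((h x).1 hlt))
  · exact Ineq.holds_mono le_rfl (NNReal.coe_le_coe.mpr hle) hv

end luSim

variable [DecidableEq X] {G : Finset (Constr X)}

theorem natCast_le_Ubound_of_mem {x : X} {o : Ineq} {c : ℕ} (h : Constr.upper x o c ∈ G) :
    (c : WithBot ℕ) ≤ Ubound G x := by
  simpa only [Ubound, upperConstAt, if_pos] using Finset.le_sup (f := upperConstAt x) h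

theorem natCast_le_Lbound_of_mem {x : X} {o : Ineq} {c : ℕ} (h : Constr.lower c o x ∈ G) :
    (c : WithBot ℕ) ≤ Lbound G x := by
  simpa only [Lbound, lowerConstAt, if_pos] using Finset.le_sup (f := lowerConstAt x) h

namespace luglu

protected theorem shift (h : luglu G v v') (δ : ℝ≥0) : luglu G (shift v δ) (shift v' δ) := by
  refine ⟨h.1.shift δ, fun φ hφ hdiag => ?_⟩
  simpa only [Constr.sat_shift_iff_of_isDiag hdiag] using h.2 φ hφ hdiag

theorem sat_of_mem (h : luglu G v v') {φ : Constr X} (hφ : φ ∈ G) (hv : φ.sat v) : φ.sat v' := by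
  cases φ with
  | upper x o c => exact h.1.sat_upper (natCast_le_Ubound_of_mem hφ) hv
  | lower c o x => exact h.1.sat_lower (natCast_le_Lbound_of_mem hφ) hv
  | diag x y o d => exact h.2 _ hφ rfl hv

end luglu

end

theorem stmt5_general {X : Type} [DecidableEq X] (G : Finset (Constr X))
    (v v' : X → ℝ≥0) (h : luglu G v v') : simG (G : Set (Constr X)) v v' :=
  fun _ hφ δ => (h.shift δ).sat_of_mem hφ

theorem stmt5 {X : Type} [Fintype X] [DecidableEq X] (G : Finset (Constr X))
    (v v' : X → ℝ≥0) (h : luglu G v v') : simG (G : Set (Constr X)) v v' :=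
  stmt5_general G v v' h
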